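/- arXiv:0901.1104 — 2 statements merged into one kernel-verified Lean document; each statement's English description precedes it below -/
import Mathlib

section
/- For every u ≥ 0 and λ > 0: u²+u < −(1/λ)·ln(λ·∑_{k=1}^∞ 2(k+u)·e^{−λ(k+u)²}) < (u+1)². -/
/-!
The series is squeezed between two telescoping series. For `0 < y`,
`H y - H (y + 1) < l * (2 * y * exp (-l * y ^ 2)) < G y - G (y + 1)`, where
`G y = exp (-l * ((y - 1) * y))` and `H y = exp (-l * y ^ 2) * (1 + l * (y - 1))`.
The right-hand inequality amounts to `l * y < sinh (l * y)`, the left-hand one to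
`(1 - q) * exp q < (1 + p) * exp (-p)` with `p = l * y` and `q = l * (y + 1)`.
Summing over `y = u + 1, u + 2, …` puts `l` times the series between `H (u + 1)`, which is at least
`exp (-l * (u + 1) ^ 2)`, and `G (u + 1) = exp (-l * (u ^ 2 + u))`.
-/

open Real Set

section Telescoping

variable {E : Type*} [AddCommGroup E] [TopologicalSpace E] [IsTopologicalAddGroup E]

theorem hasSum_sub_succ_of_summable {f : ℕ → E} (hf : Summable f) :
    HasSum (fun k ↦ f k - f (k + 1)) (f 0) := by
  obtain ⟨a, ha⟩ := hf
  simpa using ha.sub ((hasSum_nat_add_iff' 1).2 ha)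

theorem hasSum_sub_translate {R : Type*} [AddCommMonoidWithOne R] {F : R → E} {x : R}
    (hF : Summable fun k : ℕ ↦ F (k + x)) :
    HasSum (fun k : ℕ ↦ F (k + x) - F (k + x + 1)) (F x) := by
  simpa [add_right_comm] using hasSum_sub_succ_of_summable hF

end Telescoping

theorem one_sub_mul_exp_le_one_add_mul_exp_neg {t : ℝ} (ht : 0 ≤ t) :
    (1 - t) * exp t ≤ (1 + t) * exp (-t) := by
  rcases lt_or_ge t 1 with ht1 | ht1
  · have ht1' : 0 < 1 - t := sub_pos.2 ht1
    have hlog : 2 * t ≤ log ((1 + t) / (1 - t)) := by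
      have hpartial : t ≤ 1 / 2 * log ((1 + t) / (1 - t)) := by
        simpa using sum_range_le_log_div ht ht1 1
      linarith
    have hexp : exp (2 * t) ≤ (1 + t) / (1 - t) :=
      (le_log_iff_exp_le (by positivity)).1 hlog
    calc (1 - t) * exp t = exp (2 * t) * (1 - t) * exp (-t) := by
          rw [mul_right_comm, ← exp_add, mul_comm]; ring_nf
      _ ≤ (1 + t) * exp (-t) := by
          gcongr
          exact (le_div_iff₀ ht1').1 hexp
  · calc (1 - t) * exp t ≤ 0 := mul_nonpos_of_nonpos_of_nonneg (by linarith) (exp_pos t).le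
      _ ≤ (1 + t) * exp (-t) := by positivity

theorem strictAntiOn_one_add_mul_exp_neg :
    StrictAntiOn (fun t : ℝ ↦ (1 + t) * exp (-t)) (Ici 0) := by
  intro p hp q _ hpq
  have hp : 0 ≤ p := hp
  have hpq' : 0 < q - p := sub_pos.2 hpq
  calc (1 + q) * exp (-q) ≤ (1 + p) * (q - p + 1) * exp (-q) := by
        gcongr
        nlinarith
    _ < (1 + p) * exp (q - p) * exp (-q) := by
        gcongr
        exact add_one_lt_exp hpq'.ne'
    _ = (1 + p) * exp (-p) := by
        rw [mul_assoc, ← exp_add]; ring_nf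

theorem one_sub_mul_exp_lt_one_add_mul_exp_neg {p q : ℝ} (hp : 0 ≤ p) (hpq : p < q) :
    (1 - q) * exp q < (1 + p) * exp (-p) :=
  (one_sub_mul_exp_le_one_add_mul_exp_neg (hp.trans hpq.le)).trans_lt
    (strictAntiOn_one_add_mul_exp_neg hp (hp.trans hpq.le) hpq)

section GaussianSeries

variable {l x y : ℝ}

theorem summable_exp_neg_mul_nat_add_sq (hl : 0 < l) (x : ℝ) :
    Summable fun k : ℕ ↦ exp (-l * (k + x) ^ 2) := by
  have h := (HurwitzZeta.hasSum_int_evenKernel x (div_pos hl pi_pos)).summable.comp_injective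
    Nat.cast_injective
  refine h.congr fun k ↦ ?_
  simp only [Function.comp_apply, Int.cast_natCast]
  congr 1
  field_simp

theorem summable_nat_add_mul_exp_neg_mul_nat_add_sq (hl : 0 < l) (x : ℝ) :
    Summable fun k : ℕ ↦ (k + x) * exp (-l * (k + x) ^ 2) := by
  have h := (HurwitzZeta.hasSum_int_oddKernel x (div_pos hl pi_pos)).summable.comp_injective
    Nat.cast_injective
  refine h.congr fun k ↦ ?_
  simp only [Function.comp_apply, Int.cast_natCast]
  congr 2
  field_simp

theorem hasSum_mul_tsum_gaussian (hl : 0 < l) (x : ℝ) :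
    HasSum (fun k : ℕ ↦ l * (2 * (k + x) * exp (-l * (k + x) ^ 2)))
      (l * ∑' k : ℕ, 2 * (k + x) * exp (-l * (k + x) ^ 2)) := by
  refine (Summable.hasSum ?_).mul_left l
  simpa only [mul_assoc] using (summable_nat_add_mul_exp_neg_mul_nat_add_sq hl x).mul_left 2

theorem gaussian_term_lt_sub (h : 0 < l * y) :
    l * (2 * y * exp (-l * y ^ 2)) <
      exp (-l * ((y - 1) * y)) - exp (-l * ((y + 1 - 1) * (y + 1))) := by
  calc l * (2 * y * exp (-l * y ^ 2)) = 2 * (l * y) * exp (-l * y ^ 2) := by ring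
    _ < 2 * sinh (l * y) * exp (-l * y ^ 2) := by
        gcongr
        exact self_lt_sinh_iff.2 h
    _ = exp (l * y + -l * y ^ 2) - exp (-(l * y) + -l * y ^ 2) := by
        rw [sinh_eq, exp_add, exp_add]; ring
    _ = exp (-l * ((y - 1) * y)) - exp (-l * ((y + 1 - 1) * (y + 1))) := by ring_nf

theorem sub_lt_gaussian_term (hl : 0 < l) (hy : 0 ≤ y) :
    exp (-l * y ^ 2) * (1 + l * (y - 1)) - exp (-l * (y + 1) ^ 2) * (1 + l * (y + 1 - 1)) <
      l * (2 * y * exp (-l * y ^ 2)) := by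
  have key : (1 - l * (y + 1)) * exp (l * (y + 1)) < (1 + l * y) * exp (-(l * y)) :=
    one_sub_mul_exp_lt_one_add_mul_exp_neg (by positivity) (by linarith)
  have hmul := mul_lt_mul_of_pos_right key (exp_pos (-l * (y ^ 2 + y + 1)))
  rw [mul_assoc, mul_assoc, ← exp_add, ← exp_add,
    show l * (y + 1) + -l * (y ^ 2 + y + 1) = -l * y ^ 2 by ring,
    show -(l * y) + -l * (y ^ 2 + y + 1) = -l * (y + 1) ^ 2 by ring] at hmul
  linarith

theorem mul_tsum_gaussian_lt_exp (hl : 0 < l) (hx : 0 < x) :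
    l * ∑' k : ℕ, 2 * (k + x) * exp (-l * (k + x) ^ 2) < exp (-l * ((x - 1) * x)) := by
  have hsummable : Summable fun k : ℕ ↦ exp (-l * ((k + x - 1) * (k + x))) := by
    -- Completing the square: `(y - 1) * y = (y - 1 / 2) ^ 2 - 1 / 4`.
    refine ((summable_exp_neg_mul_nat_add_sq hl (x - 1 / 2)).mul_left (exp (l / 4))).congr
      fun k ↦ ?_
    rw [← exp_add]
    ring_nf
  have hterm (k : ℕ) := gaussian_term_lt_sub (l := l) (y := k + x) (by positivity)
  exact hasSum_lt (fun k ↦ (hterm k).le) (hterm 0) (hasSum_mul_tsum_gaussian hl x)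
    (hasSum_sub_translate (F := fun y ↦ exp (-l * ((y - 1) * y))) hsummable)

theorem exp_mul_lt_mul_tsum_gaussian (hl : 0 < l) (hx : 0 ≤ x) :
    exp (-l * x ^ 2) * (1 + l * (x - 1)) <
      l * ∑' k : ℕ, 2 * (k + x) * exp (-l * (k + x) ^ 2) := by
  have hsummable : Summable fun k : ℕ ↦ exp (-l * (k + x) ^ 2) * (1 + l * (k + x - 1)) :=
    (((summable_exp_neg_mul_nat_add_sq hl x).mul_left (1 - l)).add
      ((summable_nat_add_mul_exp_neg_mul_nat_add_sq hl x).mul_left l)).congr fun k ↦ by ring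
  have hterm (k : ℕ) := sub_lt_gaussian_term (y := k + x) hl (by positivity)
  exact hasSum_lt (fun k ↦ (hterm k).le) (hterm 0)
    (hasSum_sub_translate (F := fun y ↦ exp (-l * y ^ 2) * (1 + l * (y - 1))) hsummable)
    (hasSum_mul_tsum_gaussian hl x)

theorem exp_lt_mul_tsum_gaussian (hl : 0 < l) (hx : 1 ≤ x) :
    exp (-l * x ^ 2) < l * ∑' k : ℕ, 2 * (k + x) * exp (-l * (k + x) ^ 2) := by
  have hfactor : 1 ≤ 1 + l * (x - 1) :=
    le_add_of_nonneg_right (mul_nonneg hl.le (sub_nonneg.2 hx))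
  exact (le_mul_of_one_le_right (exp_pos _).le hfactor).trans_lt
    (exp_mul_lt_mul_tsum_gaussian hl (zero_le_one.trans hx))

end GaussianSeries

section Logarithm

variable {a l s : ℝ}

theorem lt_neg_one_div_mul_log_iff (hl : 0 < l) (hs : 0 < s) :
    a < -(1 / l) * log s ↔ s < exp (-l * a) := by
  rw [← log_lt_iff_lt_exp hs, show -(1 / l) * log s = -log s / l by ring, lt_div_iff₀' hl,
    lt_neg, neg_mul]

theorem neg_one_div_mul_log_lt_iff (hl : 0 < l) (hs : 0 < s) :
    -(1 / l) * log s < a ↔ exp (-l * a) < s := by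
  rw [← lt_log_iff_exp_lt hs, show -(1 / l) * log s = -log s / l by ring, div_lt_iff₀' hl,
    neg_lt, neg_mul]

end Logarithm

theorem exp_series_log_bounds (u l : ℝ) (hu : 0 ≤ u) (hl : 0 < l) :
    u ^ 2 + u
      < -(1 / l) * Real.log
          (l * ∑' k : ℕ, 2 * ((k : ℝ) + 1 + u) * Real.exp (-l * ((k : ℝ) + 1 + u) ^ 2)) ∧
    -(1 / l) * Real.log
        (l * ∑' k : ℕ, 2 * ((k : ℝ) + 1 + u) * Real.exp (-l * ((k : ℝ) + 1 + u) ^ 2))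
      < (u + 1) ^ 2 := by
  simp only [add_assoc _ 1 u, add_comm 1 u]
  have hlower := exp_lt_mul_tsum_gaussian hl (le_add_of_nonneg_left hu)
  have hupper := mul_tsum_gaussian_lt_exp hl (x := u + 1) (by positivity)
  rw [show (u + 1 - 1) * (u + 1) = u ^ 2 + u by ring] at hupper
  have hpos := (exp_pos _).trans hlower
  exact ⟨(lt_neg_one_div_mul_log_iff hl hpos).2 hupper,
    (neg_one_div_mul_log_lt_iff hl hpos).2 hlower⟩
end

section
/- For a ∈ ℝ, p > 0, μ > 0: 1/(μ(p²+a²)^μ) = (√π / (2^{μ−1/2} Γ(μ+1))) · ∫_0^∞ e^{−px} x^{2μ−1} j_{μ−1/2}(ax) dx, where j_λ(x) = J_λ(x)/x^λ with J_λ the Bessel function of the first kind. -/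
/-- The normalized Bessel function `j_λ(x) = J_λ(x)/x^λ`, defined by its power series. -/
noncomputable def jBessel (l x : ℝ) : ℝ :=
  (2 : ℝ) ^ (-l) * ∑' k : ℕ, (-(x ^ 2) / 4) ^ k / ((k.factorial : ℝ) * Real.Gamma ((k : ℝ) + l + 1))

/-!
For `|a| < p` the power series of `j_λ(ax)` can be integrated term by term against
`x ^ (2λ) e ^ (-px)`. By Legendre's duplication formula the outcome is a multiple of the binomial
series of `(1 + a² / p²) ^ (-(λ + 1/2))`, which gives the identity for these `p`. Both sides are
real-analytic in `p > 0`, so it persists for all `p > 0`.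

The Laplace integral converges for all `p > 0` because `j_λ` is bounded when `λ > -1/2`: by
Poisson's integral, `j_λ(x) / j_λ(0)` is the mean of `cos(x √U)` for a random variable `U` with the
beta distribution of parameters `1/2` and `λ + 1/2`.
-/

open MeasureTheory ProbabilityTheory Set
open scoped NNReal Nat

section Gamma

lemma Gamma_add_natCast_eq_mul_ascPochhammer {s : ℝ} (hs : 0 < s) (k : ℕ) :
    Real.Gamma (s + k) = Real.Gamma s * (ascPochhammer ℝ k).eval s := by
  induction k with
  | zero => simp
  | succ k ih =>
    have hsk : s + k ≠ 0 := by positivity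
    rw [ascPochhammer_succ_eval, Nat.cast_succ, ← add_assoc, Real.Gamma_add_one hsk, ih]
    ring

lemma Gamma_two_mul (s : ℝ) :
    Real.Gamma (2 * s)
      = 2 ^ (2 * s - 1) * (Real.Gamma s * Real.Gamma (s + 1 / 2)) / √Real.pi := by
  rw [Real.Gamma_mul_Gamma_add_half, ← neg_sub (2 * s) 1, Real.rpow_neg zero_le_two]
  field_simp

lemma Gamma_natCast_add_half_eq_factorial_div (k : ℕ) :
    Real.Gamma (k + 1 / 2) = (2 * k)! * √Real.pi / (4 ^ k * k !) := by
  have hdup := Gamma_two_mul (k + 1 / 2)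
  rw [show 2 * ((k : ℝ) + 1 / 2) = (2 * k : ℕ) + 1 by push_cast; ring, add_assoc (k : ℝ),
    add_halves, Real.Gamma_nat_eq_factorial, Real.Gamma_nat_eq_factorial, add_sub_cancel_right,
    Real.rpow_natCast, pow_mul, show (2 : ℝ) ^ 2 = 4 by norm_num] at hdup
  rw [hdup]
  field_simp

lemma ringChoose_add_sub_one_eq_Gamma_div {s : ℝ} (hs : 0 < s) (k : ℕ) :
    Ring.choose (s + k - 1) k = Real.Gamma (s + k) / (Real.Gamma s * k !) := by
  have hfact : (k ! : ℝ) * Ring.choose (s + k - 1) k = (ascPochhammer ℝ k).eval s := by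
    rw [Ring.choose, ← nsmul_eq_mul, Ring.factorial_nsmul_multichoose_eq_ascPochhammer,
      Polynomial.ascPochhammer_smeval_eq_eval]
    ring_nf
  have hΓ : Real.Gamma s ≠ 0 := (Real.Gamma_pos_of_pos hs).ne'
  rw [Gamma_add_natCast_eq_mul_ascPochhammer hs, ← hfact]
  field_simp

lemma hasSum_Gamma_div_factorial_mul_pow {s z : ℝ} (hs : 0 < s) (hz : |z| < 1) :
    HasSum (fun k : ℕ ↦ Real.Gamma (s + k) / k ! * z ^ k) (Real.Gamma s * (1 - z) ^ (-s)) := by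
  have hΓ : Real.Gamma s ≠ 0 := (Real.Gamma_pos_of_pos hs).ne'
  have hball : z ∈ Metric.eball (0 : ℝ) 1 := by
    simpa [enorm_eq_nnnorm, ← NNReal.coe_lt_coe] using hz
  have hbinom := (Real.one_div_one_sub_rpow_hasFPowerSeriesOnBall_zero s).hasSum hball
  rw [zero_add, one_div, ← Real.rpow_neg (by linarith [lt_of_abs_lt hz])] at hbinom
  refine (hbinom.mul_left (Real.Gamma s)).congr_fun fun k ↦ ?_
  simp only [FormalMultilinearSeries.apply_eq_prod_smul_coeff, Finset.prod_const,
    FormalMultilinearSeries.coeff_ofScalars, ringChoose_add_sub_one_eq_Gamma_div hs,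
    Finset.card_univ, Fintype.card_fin, smul_eq_mul]
  field_simp

end Gamma

section BetaMeasure

lemma betaPDFReal_nonneg {α β : ℝ} (hα : 0 < α) (hβ : 0 < β) (u : ℝ) :
    0 ≤ betaPDFReal α β u := by
  by_cases hu : 0 < u ∧ u < 1
  · exact (betaPDFReal_pos hu.1 hu.2 hα hβ).le
  · exact (if_neg hu).ge

lemma measurable_betaPDF (α β : ℝ) : Measurable (betaPDF α β) :=
  (measurable_betaPDFReal α β).ennreal_ofReal

lemma ae_betaMeasure_mem_Icc (α β : ℝ) : ∀ᵐ u ∂betaMeasure α β, u ∈ Icc (0 : ℝ) 1 := by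
  refine (ae_withDensity_iff (measurable_betaPDF α β)).mpr (ae_of_all _ fun u hu ↦ ?_)
  by_contra h
  obtain h | h : u ≤ 0 ∨ 1 ≤ u := by
    by_contra! h'
    exact h ⟨h'.1.le, h'.2.le⟩
  · exact hu (betaPDF_eq_zero_of_nonpos h)
  · exact hu (betaPDF_eq_zero_of_one_le h)

lemma integral_betaMeasure {α β : ℝ} (hα : 0 < α) (hβ : 0 < β) (g : ℝ → ℝ) :
    ∫ u, g u ∂betaMeasure α β = ∫ u, betaPDFReal α β u * g u := by
  rw [betaMeasure, integral_withDensity_eq_integral_toReal_smul (measurable_betaPDF α β)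
    (ae_of_all _ fun _ ↦ ENNReal.ofReal_lt_top)]
  simp only [betaPDF, ENNReal.toReal_ofReal (betaPDFReal_nonneg hα hβ _), smul_eq_mul]

lemma integral_rpow_betaMeasure {α β t : ℝ} (hα : 0 < α) (hβ : 0 < β) (hαt : 0 < α + t) :
    ∫ u, u ^ t ∂betaMeasure α β = beta (α + t) β / beta α β := by
  have htilt (u : ℝ) : betaPDFReal α β u * u ^ t
      = beta (α + t) β / beta α β * betaPDFReal (α + t) β u := by
    by_cases hu : 0 < u ∧ u < 1
    · have := (beta_pos hαt hβ).ne'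
      rw [betaPDFReal, betaPDFReal, if_pos hu, if_pos hu, add_sub_right_comm, Real.rpow_add hu.1]
      field_simp
    · simp only [betaPDFReal, if_neg hu, zero_mul, mul_zero]
  have := isProbabilityMeasureBeta hαt hβ
  have hmass : ∫ u, betaPDFReal (α + t) β u = 1 := by
    simpa using (integral_betaMeasure hαt hβ fun _ ↦ 1).symm
  rw [integral_betaMeasure hα hβ, integral_congr_ae (ae_of_all _ htilt), integral_const_mul,
    hmass, mul_one]

lemma integral_pow_betaMeasure_half {β : ℝ} (hβ : 0 < β) (k : ℕ) :
    ∫ u, u ^ k ∂betaMeasure (1 / 2) β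
      = (2 * k)! * Real.Gamma (β + 1 / 2) / (4 ^ k * k ! * Real.Gamma (k + β + 1 / 2)) := by
  have h := integral_rpow_betaMeasure (t := k) one_half_pos hβ (by positivity)
  simp only [Real.rpow_natCast] at h
  have hΓβ := (Real.Gamma_pos_of_pos hβ).ne'
  rw [h, beta, beta, add_comm (1 / 2) (k : ℝ), Gamma_natCast_add_half_eq_factorial_div,
    Real.Gamma_one_half_eq, add_right_comm, add_comm (1 / 2) β]
  field_simp

lemma hasSum_integral_cos_mul_sqrt {ν : Measure ℝ} [IsFiniteMeasure ν]
    (hν : ∀ᵐ u ∂ν, u ∈ Icc (0 : ℝ) 1) (x : ℝ) :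
    HasSum (fun k : ℕ ↦ (-1) ^ k * x ^ (2 * k) / (2 * k)! * ∫ u, u ^ k ∂ν)
      (∫ u, Real.cos (x * √u) ∂ν) := by
  have hsummable : Summable fun k : ℕ ↦ |x| ^ (2 * k) / (2 * k)! :=
    (Real.summable_pow_div_factorial |x|).comp_injective (mul_right_injective₀ two_ne_zero)
  simp only [← integral_const_mul]
  refine hasSum_integral_of_dominated_convergence (fun k _ ↦ |x| ^ (2 * k) / (2 * k)!)
    (fun k ↦ by fun_prop) (fun k ↦ ?_) (ae_of_all _ fun _ ↦ hsummable) (integrable_const _) ?_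
  · filter_upwards [hν] with u hu
    have hpow : |u| ^ k ≤ 1 := pow_le_one₀ (abs_nonneg u) (abs_le.mpr ⟨by linarith [hu.1], hu.2⟩)
    simpa [abs_mul, abs_div] using mul_le_of_le_one_right (by positivity) hpow
  · filter_upwards [hν] with u hu
    refine (Real.hasSum_cos (x * √u)).congr_fun fun k ↦ ?_
    rw [mul_pow, pow_mul √u, Real.sq_sqrt hu.1]
    ring

end BetaMeasure

section LaplaceTransform

variable {Ω : Type*} [MeasurableSpace Ω] {ν : Measure Ω} {X : Ω → ℝ}

lemma analyticOnNhd_integral_nnreal_mul_exp {f : Ω → ℝ≥0} (hf : AEMeasurable f ν) :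
    AnalyticOnNhd ℝ (fun t ↦ ∫ ω, f ω * Real.exp (t * X ω) ∂ν)
      (interior {t | Integrable (fun ω ↦ f ω * Real.exp (t * X ω)) ν}) := by
  have hmgf : mgf X (ν.withDensity fun ω ↦ f ω)
      = fun t ↦ ∫ ω, f ω * Real.exp (t * X ω) ∂ν :=
    funext fun t ↦ integral_withDensity_eq_integral_smul₀ hf _
  have hset : integrableExpSet X (ν.withDensity fun ω ↦ f ω)
      = {t | Integrable (fun ω ↦ f ω * Real.exp (t * X ω)) ν} :=
    ext fun t ↦ integrable_withDensity_iff_integrable_coe_smul₀ hf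
  rw [← hmgf, ← hset]
  exact analyticOnNhd_mgf

lemma analyticOnNhd_integral_mul_exp {f : Ω → ℝ} (hf : AEMeasurable f ν) :
    AnalyticOnNhd ℝ (fun t ↦ ∫ ω, f ω * Real.exp (t * X ω) ∂ν)
      (interior {t | Integrable (fun ω ↦ f ω * Real.exp (t * X ω)) ν}) := by
  have hpos {t : ℝ} {g : Ω → ℝ} (hg : Integrable (fun ω ↦ g ω * Real.exp (t * X ω)) ν) :
      Integrable (fun ω ↦ (g ω).toNNReal * Real.exp (t * X ω)) ν := by
    simpa only [Real.coe_toNNReal', max_mul_of_nonneg _ _ (Real.exp_pos _).le, zero_mul]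
      using hg.pos_part
  have hneg {t : ℝ} (h : Integrable (fun ω ↦ f ω * Real.exp (t * X ω)) ν) :
      Integrable (fun ω ↦ (-f ω).toNNReal * Real.exp (t * X ω)) ν :=
    hpos (g := fun ω ↦ -f ω) (by simpa only [neg_mul] using h.fun_neg)
  have hanalytic :=
    ((analyticOnNhd_integral_nnreal_mul_exp (X := X) hf.real_toNNReal).mono
      (interior_mono fun _ ↦ hpos)).sub
    ((analyticOnNhd_integral_nnreal_mul_exp (X := X) hf.neg.real_toNNReal).mono
      (interior_mono fun _ ↦ hneg))
  refine hanalytic.congr isOpen_interior fun t ht ↦ ?_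
  have ht := interior_subset ht
  simp only [Pi.sub_apply, Pi.neg_apply]
  rw [← integral_sub (hpos ht) (hneg ht)]
  simp only [← sub_mul, Real.coe_toNNReal', max_zero_sub_max_neg_zero_eq_self]

lemma analyticOnNhd_laplaceTransform {σ : ℝ} {f : ℝ → ℝ}
    (hf : AEMeasurable f (volume.restrict (Ioi 0)))
    (hint : ∀ p > σ, IntegrableOn (fun x ↦ f x * Real.exp (-p * x)) (Ioi 0)) :
    AnalyticOnNhd ℝ (fun p ↦ ∫ x in Ioi 0, f x * Real.exp (-p * x)) (Ioi σ) := by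
  have hsub : Iio (-σ) ⊆ interior {t | IntegrableOn (fun x ↦ f x * Real.exp (t * x)) (Ioi 0)} :=
    interior_maximal (fun t ht ↦ neg_neg t ▸ hint (-t) (lt_neg.mp ht)) isOpen_Iio
  refine ((analyticOnNhd_integral_mul_exp hf).mono hsub).comp analyticOnNhd_id.neg fun p hp ↦ ?_
  exact neg_lt_neg (mem_Ioi.mp hp)

lemma integrableOn_rpow_mul_exp_neg_mul {s p : ℝ} (hs : 0 < s) (hp : 0 < p) :
    IntegrableOn (fun x ↦ x ^ (s - 1) * Real.exp (-p * x)) (Ioi 0) := by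
  simpa only [Real.rpow_one] using
    integrableOn_rpow_mul_exp_neg_mul_rpow (s := s - 1) (by linarith) one_pos hp

lemma integral_rpow_mul_exp_neg_mul {s p : ℝ} (hs : 0 < s) (hp : 0 < p) :
    ∫ x in Ioi 0, x ^ (s - 1) * Real.exp (-p * x) = Real.Gamma s / p ^ s := by
  simp only [neg_mul]
  rw [Real.integral_rpow_mul_exp_neg_mul_Ioi hs hp, one_div, Real.inv_rpow hp.le, inv_mul_eq_div]

lemma integral_tsum_mul_rpow_mul_exp_neg_mul {ι : Type*} [Countable ι] {c s : ι → ℝ} {p S : ℝ}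
    (hs : ∀ i, 0 < s i) (hp : 0 < p)
    (hS : HasSum (fun i ↦ c i * (Real.Gamma (s i) / p ^ s i)) S) :
    ∫ x in Ioi 0, (∑' i, c i * x ^ (s i - 1)) * Real.exp (-p * x) = S := by
  have hint (i : ι) :
      IntegrableOn (fun x ↦ c i * (x ^ (s i - 1) * Real.exp (-p * x))) (Ioi 0) :=
    (integrableOn_rpow_mul_exp_neg_mul (hs i) hp).const_mul _
  have hnorm (i : ι) : ∫ x in Ioi 0, ‖c i * (x ^ (s i - 1) * Real.exp (-p * x))‖
      = |c i * (Real.Gamma (s i) / p ^ s i)| := by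
    have hpos : 0 < Real.Gamma (s i) / p ^ s i :=
      div_pos (Real.Gamma_pos_of_pos (hs i)) (Real.rpow_pos_of_pos hp _)
    rw [abs_mul, abs_of_pos hpos, ← integral_rpow_mul_exp_neg_mul (hs i) hp, ← integral_const_mul]
    refine setIntegral_congr_fun measurableSet_Ioi fun x hx ↦ ?_
    have hx : 0 < x := hx
    rw [norm_mul, Real.norm_eq_abs, Real.norm_of_nonneg (by positivity)]
  have hsum := hasSum_integral_of_summable_integral_norm hint
    (by simpa only [hnorm] using hS.summable.abs)
  simp only [integral_const_mul, integral_rpow_mul_exp_neg_mul (hs _) hp] at hsum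
  simp only [← tsum_mul_right, mul_assoc]
  exact hsum.unique hS

end LaplaceTransform

section Bessel

variable {l : ℝ}

@[fun_prop]
lemma measurable_jBessel (l : ℝ) : Measurable (jBessel l) :=
  (Measurable.tsum fun k ↦ by fun_prop).const_mul _

lemma jBessel_zero_right (l : ℝ) : jBessel l 0 = 2 ^ (-l) / Real.Gamma (l + 1) := by
  rw [jBessel, tsum_eq_single 0 fun k hk ↦ by simp [hk]]
  simp [div_eq_mul_inv]

/-- Poisson's integral for the Bessel function, after the substitution `u = t ^ 2`. -/
lemma jBessel_eq_integral_betaMeasure (hl : -(1 / 2) < l) (x : ℝ) :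
    jBessel l x = jBessel l 0 * ∫ u, Real.cos (x * √u) ∂betaMeasure (1 / 2) (l + 1 / 2) := by
  have hβ : 0 < l + 1 / 2 := by linarith
  have := isProbabilityMeasureBeta one_half_pos hβ
  have hcos := hasSum_integral_cos_mul_sqrt (ae_betaMeasure_mem_Icc (1 / 2) (l + 1 / 2)) x
  rw [← hcos.tsum_eq, jBessel_zero_right, jBessel, ← tsum_mul_left, ← tsum_mul_left]
  refine tsum_congr fun k ↦ ?_
  have hΓ : Real.Gamma (l + 1) ≠ 0 := (Real.Gamma_pos_of_pos (by linarith)).ne'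
  rw [integral_pow_betaMeasure_half hβ, show l + 1 / 2 + 1 / 2 = l + 1 by ring,
    show k + (l + 1 / 2) + 1 / 2 = k + l + 1 by ring, div_pow, neg_pow, ← pow_mul]
  field_simp

lemma abs_jBessel_le (hl : -(1 / 2) < l) (x : ℝ) : |jBessel l x| ≤ jBessel l 0 := by
  have := isProbabilityMeasureBeta one_half_pos (show 0 < l + 1 / 2 by linarith)
  have hcos : |∫ u, Real.cos (x * √u) ∂betaMeasure (1 / 2) (l + 1 / 2)| ≤ 1 := by
    have hbound (u : ℝ) : ‖Real.cos (x * √u)‖ ≤ 1 := Real.abs_cos_le_one _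
    have hmean := norm_integral_le_of_norm_le_const
      (ae_of_all (betaMeasure (1 / 2) (l + 1 / 2)) hbound)
    rwa [probReal_univ, mul_one] at hmean
  have hzero : 0 ≤ jBessel l 0 := by
    have := Real.Gamma_pos_of_pos (show 0 < l + 1 by linarith)
    rw [jBessel_zero_right]
    positivity
  rw [jBessel_eq_integral_betaMeasure hl, abs_mul, abs_of_nonneg hzero]
  exact mul_le_of_le_one_right hzero hcos

lemma analyticOnNhd_laplaceTransform_jBessel (hl : -(1 / 2) < l) {s : ℝ} (hs : 0 < s) (a : ℝ) :
    AnalyticOnNhd ℝ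
      (fun p ↦ ∫ x in Ioi 0, x ^ (s - 1) * jBessel l (a * x) * Real.exp (-p * x)) (Ioi 0) := by
  refine analyticOnNhd_laplaceTransform (by fun_prop) fun p hp ↦ ?_
  simp only [mul_right_comm _ (jBessel l _)]
  exact (integrableOn_rpow_mul_exp_neg_mul hs hp).mul_bdd
    ((measurable_jBessel l).comp (measurable_const_mul a)).aestronglyMeasurable
    (ae_of_all _ fun x ↦ abs_jBessel_le hl (a * x))

/-- The coefficient of `x ^ (2 * k)` in the power series of `x ↦ j_l(a x)`, which is integrated
term by term to compute the Laplace transform. -/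
noncomputable def jBesselCoeff (l a : ℝ) (k : ℕ) : ℝ :=
  2 ^ (-l) * ((-(a ^ 2) / 4) ^ k / (k ! * Real.Gamma (k + l + 1)))

lemma rpow_mul_jBessel_eq_tsum (l s a : ℝ) {x : ℝ} (hx : 0 < x) :
    x ^ (s - 1) * jBessel l (a * x)
      = ∑' k : ℕ, jBesselCoeff l a k * x ^ (s + (2 * k : ℕ) - 1) := by
  rw [jBessel, ← mul_assoc, ← tsum_mul_left]
  refine tsum_congr fun k ↦ ?_
  rw [add_sub_right_comm, Real.rpow_add_natCast hx.ne', pow_mul, jBesselCoeff,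
    show -(a * x) ^ 2 / 4 = -(a ^ 2) / 4 * x ^ 2 by ring, mul_pow]
  ring

lemma jBesselCoeff_mul_Gamma_div_rpow (hl : -(1 / 2) < l) (a : ℝ) {p : ℝ} (hp : 0 < p) (k : ℕ) :
    jBesselCoeff l a k
        * (Real.Gamma (2 * l + 1 + (2 * k : ℕ)) / p ^ (2 * l + 1 + (2 * k : ℕ)))
      = 2 ^ l / √Real.pi / p ^ (2 * l + 1)
        * (Real.Gamma (l + 1 / 2 + k) / k ! * (-(a ^ 2) / p ^ 2) ^ k) := by
  have hdup : Real.Gamma (2 * l + 1 + (2 * k : ℕ))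
      = (2 ^ l) ^ 2 * 4 ^ k * (Real.Gamma (l + 1 / 2 + k) * Real.Gamma (k + l + 1)) / √Real.pi := by
    rw [show 2 * l + 1 + (2 * k : ℕ) = 2 * (l + 1 / 2 + k) by push_cast; ring, Gamma_two_mul,
      show 2 * (l + 1 / 2 + k) - 1 = (2 : ℕ) * l + (2 * k : ℕ) by push_cast; ring,
      show l + 1 / 2 + k + 1 / 2 = k + l + 1 by ring, Real.rpow_add_natCast two_ne_zero,
      mul_comm _ l, Real.rpow_mul_natCast zero_le_two, pow_mul 2 2 k]
    norm_num
  have hΓ : Real.Gamma (k + l + 1) ≠ 0 :=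
    (Real.Gamma_pos_of_pos (by linarith [k.cast_nonneg (α := ℝ)])).ne'
  rw [hdup, jBesselCoeff, Real.rpow_neg zero_le_two, Real.rpow_add_natCast hp.ne', pow_mul, div_pow,
    div_pow]
  field_simp

lemma laplaceTransform_jBessel_of_abs_lt (hl : -(1 / 2) < l) {a p : ℝ} (hap : |a| < p) :
    ∫ x in Ioi 0, x ^ (2 * l) * jBessel l (a * x) * Real.exp (-p * x)
      = 2 ^ l * Real.Gamma (l + 1 / 2) / √Real.pi * (p ^ 2 + a ^ 2) ^ (-(l + 1 / 2)) := by
  have hp : 0 < p := (abs_nonneg a).trans_lt hap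
  have hz : |-(a ^ 2) / p ^ 2| < 1 := by
    rw [abs_div, abs_neg, abs_sq, abs_sq, div_lt_one (by positivity)]
    exact sq_lt_sq.mpr (hap.trans_le (le_abs_self p))
  have hbinom := (hasSum_Gamma_div_factorial_mul_pow (show 0 < l + 1 / 2 by linarith) hz).mul_left
    (2 ^ l / √Real.pi / p ^ (2 * l + 1))
  simp only [← jBesselCoeff_mul_Gamma_div_rpow hl a hp] at hbinom
  have hpow : (p ^ 2 + a ^ 2) ^ (-(l + 1 / 2))
      = (1 - -(a ^ 2) / p ^ 2) ^ (-(l + 1 / 2)) / p ^ (2 * l + 1) := by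
    have hfactor : p ^ 2 + a ^ 2 = (1 - -(a ^ 2) / p ^ 2) * p ^ 2 := by
      field_simp
      ring
    rw [hfactor, Real.mul_rpow (by linarith [lt_of_abs_lt hz]) (sq_nonneg p),
      ← Real.rpow_natCast_mul hp.le, div_eq_mul_inv _ (p ^ (2 * l + 1)), ← Real.rpow_neg hp.le]
    ring_nf
  calc ∫ x in Ioi 0, x ^ (2 * l) * jBessel l (a * x) * Real.exp (-p * x)
      = ∫ x in Ioi 0, (∑' k : ℕ, jBesselCoeff l a k * x ^ (2 * l + 1 + (2 * k : ℕ) - 1))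
          * Real.exp (-p * x) := by
        refine setIntegral_congr_fun measurableSet_Ioi fun x hx ↦ ?_
        simp only [← rpow_mul_jBessel_eq_tsum l (2 * l + 1) a hx, add_sub_cancel_right]
    _ = 2 ^ l / √Real.pi / p ^ (2 * l + 1)
          * (Real.Gamma (l + 1 / 2) * (1 - -(a ^ 2) / p ^ 2) ^ (-(l + 1 / 2))) :=
        integral_tsum_mul_rpow_mul_exp_neg_mul
          (fun k ↦ add_pos_of_pos_of_nonneg (by linarith) (Nat.cast_nonneg _)) hp hbinom
    _ = _ := by
        rw [hpow]
        ring

lemma laplaceTransform_jBessel (hl : -(1 / 2) < l) (a : ℝ) {p : ℝ} (hp : 0 < p) :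
    ∫ x in Ioi 0, x ^ (2 * l) * jBessel l (a * x) * Real.exp (-p * x)
      = 2 ^ l * Real.Gamma (l + 1 / 2) / √Real.pi * (p ^ 2 + a ^ 2) ^ (-(l + 1 / 2)) := by
  have hlhs := analyticOnNhd_laplaceTransform_jBessel hl (s := 2 * l + 1) (by linarith) a
  simp only [add_sub_cancel_right] at hlhs
  have hrhs : AnalyticOnNhd ℝ (fun q ↦ 2 ^ l * Real.Gamma (l + 1 / 2) / √Real.pi
      * (q ^ 2 + a ^ 2) ^ (-(l + 1 / 2))) (Ioi 0) := fun q (hq : 0 < q) ↦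
    ContDiffAt.analyticAt (by fun_prop (disch := positivity))
  have hmem : |a| + 1 ∈ Ioi 0 := mem_Ioi.mpr (by positivity)
  refine hlhs.eqOn_of_preconnected_of_eventuallyEq hrhs isPreconnected_Ioi hmem ?_ hp
  filter_upwards [Ioi_mem_nhds (lt_add_one |a|)] with q hq
  exact laplaceTransform_jBessel_of_abs_lt hl hq

end Bessel

theorem laplace_bessel_identity (a p μ : ℝ) (hp : 0 < p) (hμ : 0 < μ) :
    1 / (μ * (p ^ 2 + a ^ 2) ^ μ)
      = Real.sqrt Real.pi / ((2 : ℝ) ^ (μ - 1 / 2) * Real.Gamma (μ + 1))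
          * ∫ x in Set.Ioi (0 : ℝ), Real.exp (-p * x) * x ^ (2 * μ - 1) * jBessel (μ - 1 / 2) (a * x) := by
  have hlaplace := laplaceTransform_jBessel (show -(1 / 2) < μ - 1 / 2 by linarith) a hp
  rw [sub_add_cancel, Real.rpow_neg (by positivity), show 2 * (μ - 1 / 2) = 2 * μ - 1 by ring]
    at hlaplace
  have hΓ : Real.Gamma μ ≠ 0 := (Real.Gamma_pos_of_pos hμ).ne'
  simp only [mul_assoc, mul_comm (Real.exp _)] at hlaplace ⊢
  rw [hlaplace, Real.Gamma_add_one hμ.ne']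
  field_simp
end
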